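/- arXiv:2409.13553 — 2 statements merged into one kernel-verified Lean document; each statement's English description precedes it below -/
import Mathlib

section
/- Let F be an infinite field, let u > r ≥ 2 be integers and let 1 ≤ k ≤ r−1. Define the partition P of 2u−r by: P = ([u]^k, 1^{u−r}) if 2k ≤ r, and P = ([u+r−2k]^{r−k}, 1^{u+2k−2r}) if 2k > r. Then there exists a nonempty subset U of X^Q_{k,u−r}, open in the Zariski subspace topology of X^Q_{k,u−r} ⊆ F^N, such that for every x ∈ U the Jordan type of M_x equals P. -/
open Polynomial

noncomputable section

/-- The quotient module `F[t]/(t^m)`. -/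
abbrev PQ (F : Type*) [Field F] (m : ℕ) : Type _ := F[X] ⧸ Ideal.span {(X : F[X]) ^ m}

variable (F : Type*) [Field F]

lemma mulQ_cond (m m' : ℕ) (c : F[X]) (h : (X : F[X]) ^ m' ∣ c * X ^ m) :
    Ideal.span {(X : F[X]) ^ m} ≤
      Submodule.comap (LinearMap.mulLeft F[X] c) (Ideal.span {(X : F[X]) ^ m'}) := by
  rw [Ideal.span_le]
  intro x hx
  rw [Set.mem_singleton_iff] at hx
  subst hx
  simp only [SetLike.mem_coe, Submodule.mem_comap, LinearMap.mulLeft_apply]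
  exact Ideal.mem_span_singleton.mpr h

/-- The `F`-linear map `F[t]/(t^m) → F[t]/(t^{m'})` induced by multiplication by the
polynomial `c`, well-defined whenever `t^{m'} ∣ c · t^m`. -/
def mulQ (m m' : ℕ) (c : F[X]) (h : (X : F[X]) ^ m' ∣ c * X ^ m) :
    PQ F m →ₗ[F] PQ F m' :=
  LinearMap.restrictScalars F
    (Submodule.mapQ (Ideal.span {(X : F[X]) ^ m}) (Ideal.span {(X : F[X]) ^ m'})
      (LinearMap.mulLeft F[X] c) (mulQ_cond F m m' c h))

lemma dvd_A (u : ℕ) (c : F[X]) : (X : F[X]) ^ u ∣ c * X ^ u := Dvd.intro c (mul_comm _ _)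

lemma dvd_G (u r : ℕ) (hru : r ≤ u) (g : F[X]) :
    (X : F[X]) ^ u ∣ (X ^ r * g) * X ^ (u - r) := by
  refine Dvd.intro g ?_
  rw [mul_comm ((X:F[X])^r) g, mul_assoc, ← pow_add, Nat.add_sub_cancel' hru, mul_comm]

lemma dvd_H (u r : ℕ) (h : F[X]) : (X : F[X]) ^ (u - r) ∣ h * X ^ u :=
  Dvd.dvd.mul_left (pow_dvd_pow _ (Nat.sub_le u r)) h

/-- The `F[t]`-module endomorphism of `V = F[t]/(t^u) ⊕ t^r·F[t]/(t^u)` given by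
`M(v₁, v₂) = (a v₁ + g v₂, h t^r v₁ + b v₂)`, where the second summand
`t^r·F[t]/(t^u)` is identified with `F[t]/(t^{u-r})` via `w ↦ t^r w`
(so the lower-left entry becomes `v₁ ↦ h v₁ mod t^{u-r}` and the upper-right
entry becomes `w ↦ t^r g w mod t^u`). -/
def Mmap (u r : ℕ) (hru : r ≤ u) (a g h b : F[X]) :
    (PQ F u × PQ F (u - r)) →ₗ[F] (PQ F u × PQ F (u - r)) :=
  LinearMap.prod
    ((mulQ F u u a (dvd_A F u a)).comp (LinearMap.fst F (PQ F u) (PQ F (u - r))) +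
      (mulQ F (u - r) u (X ^ r * g) (dvd_G F u r hru g)).comp
        (LinearMap.snd F (PQ F u) (PQ F (u - r))))
    ((mulQ F u (u - r) h (dvd_H F u r h)).comp (LinearMap.fst F (PQ F u) (PQ F (u - r))) +
      (mulQ F (u - r) (u - r) b (dvd_A F (u - r) b)).comp
        (LinearMap.snd F (PQ F u) (PQ F (u - r))))

/-- `B` has Jordan type `P` (a partition given as the multiset of its parts):
the corank of every power of `B` is the one prescribed by `P`, i.e.
`dim ker (B^s) = Σ_i min(pᵢ, s)` for all `s ≥ 0`. -/
def JordanTypeIs {V : Type*} [AddCommGroup V] [Module F V] (B : Module.End F V)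
    (P : Multiset ℕ) : Prop :=
  ∀ s : ℕ, Module.finrank F (LinearMap.ker (B ^ s)) = (P.map fun p => min p s).sum

/-- Index type for the `N = 4u-3r-2` coordinates
`(a_1,…,a_{u−1}, b_1,…,b_{u−r−1}, g_0,…,g_{u−r−1}, h_0,…,h_{u−r−1})`. -/
abbrev Vars (u r : ℕ) : Type := Fin (u - 1) ⊕ Fin (u - r - 1) ⊕ Fin (u - r) ⊕ Fin (u - r)

/-- `a = Σ_{i=1}^{u−1} a_i t^i`. -/
def paOf (u r : ℕ) (x : Vars u r → F) : F[X] :=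
  ∑ i : Fin (u - 1), C (x (Sum.inl i)) * X ^ ((i : ℕ) + 1)

/-- `b = Σ_{i=1}^{u−r−1} b_i t^i`. -/
def pbOf (u r : ℕ) (x : Vars u r → F) : F[X] :=
  ∑ i : Fin (u - r - 1), C (x (Sum.inr (Sum.inl i))) * X ^ ((i : ℕ) + 1)

/-- `g = Σ_{i=0}^{u−r−1} g_i t^i`. -/
def pgOf (u r : ℕ) (x : Vars u r → F) : F[X] :=
  ∑ i : Fin (u - r), C (x (Sum.inr (Sum.inr (Sum.inl i)))) * X ^ (i : ℕ)

/-- `h = Σ_{i=0}^{u−r−1} h_i t^i`. -/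
def phOf (u r : ℕ) (x : Vars u r → F) : F[X] :=
  ∑ i : Fin (u - r), C (x (Sum.inr (Sum.inr (Sum.inr i)))) * X ^ (i : ℕ)

/-- The nilpotent endomorphism `M_x` of `V` determined by the point `x ∈ F^N`. -/
def Mx (u r : ℕ) (hru : r ≤ u) (x : Vars u r → F) :
    Module.End F (PQ F u × PQ F (u - r)) :=
  Mmap F u r hru (paOf F u r x) (pgOf F u r x) (phOf F u r x) (pbOf F u r x)

/-- The variable `a_i` as a polynomial function on `F^N` (meaningful for `1 ≤ i ≤ u-1`). -/
def Av (u r : ℕ) (i : ℕ) : MvPolynomial (Vars u r) F :=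
  if h : i - 1 < u - 1 then MvPolynomial.X (Sum.inl ⟨i - 1, h⟩) else 0

/-- The variable `b_i` as a polynomial function on `F^N` (meaningful for `1 ≤ i ≤ u-r-1`). -/
def Bv (u r : ℕ) (i : ℕ) : MvPolynomial (Vars u r) F :=
  if h : i - 1 < u - r - 1 then MvPolynomial.X (Sum.inr (Sum.inl ⟨i - 1, h⟩)) else 0

/-- The variable `g_i` as a polynomial function on `F^N` (meaningful for `0 ≤ i ≤ u-r-1`). -/
def Gv (u r : ℕ) (i : ℕ) : MvPolynomial (Vars u r) F :=
  if h : i < u - r then MvPolynomial.X (Sum.inr (Sum.inr (Sum.inl ⟨i, h⟩))) else 0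

/-- The variable `h_i` as a polynomial function on `F^N` (meaningful for `0 ≤ i ≤ u-r-1`). -/
def Hv (u r : ℕ) (i : ℕ) : MvPolynomial (Vars u r) F :=
  if h : i < u - r then MvPolynomial.X (Sum.inr (Sum.inr (Sum.inr ⟨i, h⟩))) else 0

/-- The set of polynomials `E^Q_{k,l}` for `Q = (u, u-r)`:
`{a_1,…,a_{k−1}, b_1,…,b_{l−1}}` if `k+l ≤ r`, and
`{a_1,…,a_{k−1}, b_1,…,b_{r−k−1}}` together with the quadratic polynomials
`Σ_{j=0}^{m} a_{k+j} b_{r−k+m−j} − Σ_{j=0}^{m} g_j h_{m−j}` for `0 ≤ m ≤ k+l−r−1`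
if `k+l ≥ r+1`. -/
def Eset (u r k l : ℕ) : Set (MvPolynomial (Vars u r) F) :=
  if k + l ≤ r then
    {p | ∃ i, 1 ≤ i ∧ i ≤ k - 1 ∧ p = Av F u r i} ∪
      {p | ∃ i, 1 ≤ i ∧ i ≤ l - 1 ∧ p = Bv F u r i}
  else
    {p | ∃ i, 1 ≤ i ∧ i ≤ k - 1 ∧ p = Av F u r i} ∪
      {p | ∃ i, 1 ≤ i ∧ i ≤ r - k - 1 ∧ p = Bv F u r i} ∪
      {p | ∃ m, m ≤ k + l - r - 1 ∧ p =
        (∑ j ∈ Finset.range (m + 1), Av F u r (k + j) * Bv F u r (r - k + m - j)) -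
          (∑ j ∈ Finset.range (m + 1), Gv F u r j * Hv F u r (m - j))}

/-- The common zero locus in `F^N` of a set `T` of polynomials. -/
def zLocus (u r : ℕ) (T : Set (MvPolynomial (Vars u r) F)) : Set (Vars u r → F) :=
  {x | ∀ p ∈ T, MvPolynomial.eval x p = 0}

/-- `X^Q_{k,l}`, the common zero locus of `E^Q_{k,l}`. -/
def Xlocus (u r k l : ℕ) : Set (Vars u r → F) := zLocus F u r (Eset F u r k l)

/-- Zariski-closed subsets of `F^N`: common zero loci of sets of polynomials. -/
def IsZClosed (u r : ℕ) (S : Set (Vars u r → F)) : Prop :=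
  ∃ T : Set (MvPolynomial (Vars u r) F), S = zLocus F u r T

/-- The Zariski closure of a subset of `F^N`. -/
def zClosure (u r : ℕ) (S : Set (Vars u r → F)) : Set (Vars u r → F) :=
  ⋂₀ {C | IsZClosed F u r C ∧ S ⊆ C}

end

section Burge

/-- Scanning the frequency sequence `f` downward from `j`, forming backward pairs:
whenever `f j > 0` (and `j` has not been consumed by a previously formed pair),
put `j` in the set and consume the index `j - 1`. -/
def RsetGo (f : ℕ → ℕ) : ℕ → Finset ℕ
  | 0 => ∅
  | 1 => if 0 < f 1 then {1} else ∅
  | (j + 2) => if 0 < f (j + 2) then insert (j + 2) (RsetGo f j) else RsetGo f (j + 1)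

/-- The set `R(P)` of a partition `P` (given as the multiset of its parts, with
frequency sequence `j ↦ P.count j`); the scan starts at the largest part `P.sup`. -/
def Rset (P : Multiset ℕ) : Finset ℕ := RsetGo (fun j => P.count j) P.sup

/-- The partition `∂P`: for each `j ∈ R(P)` one copy of the part `j` is replaced by
`j - 1` (discarded when `j - 1 = 0`). -/
def dP (P : Multiset ℕ) : Multiset ℕ :=
  (P - (Rset P).val) + (((Rset P).val.map fun j => j - 1).filter fun j => 0 < j)

/-- Fuel-driven computation of the Burge code; `false` stands for `α`, `true` for `β`.
(The fuel `P.sum + 1` used in `burgeCode` always suffices, since `∂` strictly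
decreases the size of a nonempty partition.) -/
def burgeGo : ℕ → Multiset ℕ → List Bool
  | 0, _ => []
  | (n + 1), P =>
    if P = 0 then [false]
    else (if 1 ∈ Rset P then true else false) :: burgeGo n (dP P)

/-- The Burge code of the partition `P`: the word `w_1 ⋯ w_m` with `w_i = β` (`true`)
if `∂^{i-1} P` is in class `B` (i.e. `1 ∈ R(∂^{i-1}P)`) and `w_i = α` (`false`)
otherwise, where `m = min { i : ∂^{i-1} P = (0) }`. -/
def burgeCode (P : Multiset ℕ) : List Bool := burgeGo (P.sum + 1) P

/-- The almost rectangular partition `[m]^k` of `m` into `k` parts, each equal to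
`⌈m/k⌉` or `⌊m/k⌋`. -/
def arPart (m k : ℕ) : Multiset ℕ :=
  Multiset.replicate (m % k) (m / k + 1) + Multiset.replicate (k - m % k) (m / k)

/-- Greedy decomposition of a weakly decreasing list of parts into maximal
almost rectangular segments from the top (fuel-driven helper). -/
def greedyGo : ℕ → List ℕ → List (List ℕ)
  | 0, _ => []
  | _ + 1, [] => []
  | n + 1, p :: rest =>
    ((p :: rest).takeWhile fun q => decide (p ≤ q + 1)) ::
      greedyGo n ((p :: rest).dropWhile fun q => decide (p ≤ q + 1))

/-- The greedy decomposition of a weakly decreasing list of parts into maximal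
almost rectangular subpartitions from the top. -/
def greedy (l : List ℕ) : List (List ℕ) := greedyGo l.length l

end Burge

/-!
Identify `V` with `F[t]/(t^u) ⊕ F[t]/(t^(u-r))`, on which `M_x` acts through the matrix
`A = !![a, t^r g; h, b]`. The equations of `X^Q_{k,u-r}` say that `t^k ∣ a`, `t^(r-k) ∣ b` and
`t^(k+u-r) ∣ det A`. With `c = min k (r-k)` this gives a factorization
`A = diag(t^k, 1) * B * diag(1, t^c)`, and since `diag(1, t^c) * diag(t^k, 1)` equals
`t^c • diag(t^(k-c), 1)`, the power `A^(n+1)` is `t^(nc) • diag(t^k, 1) * P * diag(1, t^c)` with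
`P = B * (diag(t^(k-c), 1) * B)^n`.

If the upper left entry of `P` is a unit at `t = 0`, the first component of `M_x^(n+1)` has image
`t^(k+nc) F[t]/(t^u)`, and divisibility of the determinant makes the second component vanish
wherever the first one does. Hence `dim ker M_x^(n+1) = min (k+nc) u + (u-r)`, which determines the
Jordan type. The unit condition only involves the value of `B` at `t = 0`, so it is the
nonvanishing of polynomials in the coordinates of `x`; as only `n < u` matter, it defines an open
subset. An explicit point shows that this subset meets `X^Q_{k,u-r}`.
-/

section TwistedPower

open Matrix

/-- The `(n + 1)`-st power of `B` for the twisted product `B ∗ B' = B * diag(t, 1) * B'`. -/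
def twistedPow {R : Type*} [CommRing R] (t : R) (B : Matrix (Fin 2) (Fin 2) R) (n : ℕ) :
    Matrix (Fin 2) (Fin 2) R :=
  B * (!![t, 0; 0, 1] * B) ^ n

variable {R S : Type*} [CommRing R] [CommRing S]

lemma det_twistedPow (t : R) (B : Matrix (Fin 2) (Fin 2) R) (n : ℕ) :
    (twistedPow t B n).det = t ^ n * B.det ^ (n + 1) := by
  simp only [twistedPow, det_mul, det_pow, det_fin_two_of]
  ring

lemma map_twistedPow (f : R →+* S) (t : R) (B : Matrix (Fin 2) (Fin 2) R) (n : ℕ) :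
    (twistedPow t B n).map f = twistedPow (f t) (B.map f) n := by
  have map_diag : (!![t, 0; 0, 1] : Matrix (Fin 2) (Fin 2) R).map f = !![f t, 0; 0, 1] := by
    ext i j
    fin_cases i <;> fin_cases j <;> simp
  simp only [twistedPow, ← RingHom.mapMatrix_apply, map_mul, map_pow]
  simp only [RingHom.mapMatrix_apply, map_diag]

-- The inner factors of the power combine to `diag(1, s) * diag(s * t, 1) = s • diag(t, 1)`.
lemma diag_mul_mul_diag_pow_succ (s t : R) (B : Matrix (Fin 2) (Fin 2) R) (n : ℕ) :
    (!![s * t, 0; 0, 1] * B * !![1, 0; 0, s]) ^ (n + 1) =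
      s ^ n • (!![s * t, 0; 0, 1] * twistedPow t B n * !![1, 0; 0, s]) := by
  have inner : (!![1, 0; 0, s] * !![s * t, 0; 0, 1] : Matrix (Fin 2) (Fin 2) R) =
      s • !![t, 0; 0, 1] := by
    simp
  induction n with
  | zero => simp [twistedPow]
  | succ n ih =>
    calc (!![s * t, 0; 0, 1] * B * !![1, 0; 0, s]) ^ (n + 1 + 1)
        = s ^ n • (!![s * t, 0; 0, 1] * twistedPow t B n *
            (!![1, 0; 0, s] * !![s * t, 0; 0, 1]) * B * !![1, 0; 0, s]) := by
          rw [pow_succ, ih, Matrix.smul_mul]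
          simp only [Matrix.mul_assoc]
      _ = s ^ (n + 1) • (!![s * t, 0; 0, 1] * twistedPow t B (n + 1) * !![1, 0; 0, s]) := by
          rw [inner, Matrix.mul_smul, Matrix.smul_mul, Matrix.smul_mul, smul_smul, ← pow_succ]
          simp only [twistedPow, pow_succ, Matrix.mul_assoc]

lemma smul_diag_mul_mul_diag (x y z : R) (P : Matrix (Fin 2) (Fin 2) R) :
    x • (!![y, 0; 0, 1] * P * !![1, 0; 0, z]) =
      !![x * y * P 0 0, x * y * (z * P 0 1); x * P 1 0, x * z * P 1 1] := by
  ext i j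
  simp only [Matrix.smul_apply, mul_apply, Fin.sum_univ_two, smul_eq_mul]
  fin_cases i <;> fin_cases j <;> simp <;> ring

lemma twistedPow_diag_apply_zero_zero (t a b : R) (n : ℕ) :
    twistedPow t !![a, 0; 0, b] n 0 0 = t ^ n * a ^ (n + 1) := by
  have diag_pow : (!![t * a, 0; 0, b] : Matrix (Fin 2) (Fin 2) R) ^ n =
      !![(t * a) ^ n, 0; 0, b ^ n] := by
    induction n with
    | zero => simp [one_fin_two]
    | succ n ih => simp [pow_succ, ih]
  simp [twistedPow, diag_pow, mul_pow, pow_succ', mul_left_comm]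

lemma twistedPow_zero_succ_apply_zero_zero (a g h b : R) (n : ℕ) :
    twistedPow 0 !![a, g; h, b] (n + 1) 0 0 = g * b ^ n * h := by
  have pow_succ_eq : (!![0, 0; h, b] : Matrix (Fin 2) (Fin 2) R) ^ (n + 1) =
      !![0, 0; b ^ n * h, b ^ (n + 1)] := by
    induction n with
    | zero => simp
    | succ n ih =>
      rw [pow_succ, ih, mul_fin_two]
      ext i j
      fin_cases i <;> fin_cases j <;> simp [pow_succ]
  have diag_mul : (!![0, 0; 0, 1] * !![a, g; h, b] : Matrix (Fin 2) (Fin 2) R) =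
      !![0, 0; h, b] := by
    ext i j
    fin_cases i <;> fin_cases j <;> simp
  rw [twistedPow, diag_mul, pow_succ_eq]
  simp [mul_assoc]

end TwistedPower

section TruncatedPolynomials

variable {F : Type*} [Field F]

lemma PQ_mk_eq_zero_iff {m : ℕ} {p : F[X]} :
    (Submodule.Quotient.mk p : PQ F m) = 0 ↔ X ^ m ∣ p := by
  rw [Submodule.Quotient.mk_eq_zero, Ideal.mem_span_singleton]

lemma finrank_PQ (m : ℕ) : Module.finrank F (PQ F m) = m := by
  simpa using finrank_quotient_span_eq_natDegree (f := (X : F[X]) ^ m)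

instance finite_PQ (m : ℕ) : Module.Finite F (PQ F m) :=
  (monic_X_pow m).finite_quotient

lemma isCoprime_X_pow_of_coeff_zero_ne_zero {p : F[X]} (hp : p.coeff 0 ≠ 0) (m : ℕ) :
    IsCoprime (X ^ m) p := by
  refine IsCoprime.pow_left ?_
  rwa [irreducible_X.coprime_iff_not_dvd, X_dvd_iff]

lemma X_pow_dvd_mul_X_pow_sub {m e : ℕ} (he : e ≤ m) : (X : F[X]) ^ m ∣ X ^ e * X ^ (m - e) := by
  rw [← pow_add, Nat.add_sub_cancel' he]

lemma X_pow_dvd_X_pow_mul_iff {n r : ℕ} {p : F[X]} : X ^ n ∣ X ^ r * p ↔ X ^ (n - r) ∣ p := by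
  rcases le_total n r with h | h
  · simp [Nat.sub_eq_zero_of_le h, (pow_dvd_pow (X : F[X]) h).mul_right p]
  · obtain ⟨d, rfl⟩ := Nat.exists_eq_add_of_le h
    rw [pow_add, mul_dvd_mul_iff_left (pow_ne_zero r X_ne_zero), Nat.add_sub_cancel_left]

lemma mulQ_X_pow_injective {m e : ℕ} (he : e ≤ m) :
    Function.Injective (mulQ F (m - e) m (X ^ e) (X_pow_dvd_mul_X_pow_sub he)) := by
  rw [injective_iff_map_eq_zero]
  intro v hv
  obtain ⟨p, rfl⟩ := Submodule.Quotient.mk_surjective _ v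
  exact PQ_mk_eq_zero_iff.2 (X_pow_dvd_X_pow_mul_iff.1 (PQ_mk_eq_zero_iff.1 hv))

end TruncatedPolynomials

section InducedEndomorphisms

variable {F : Type*} [Field F] {m m' : ℕ} {A B : Matrix (Fin 2) (Fin 2) F[X]}
  {S T : Module.End F (PQ F m × PQ F m')}

/-- The endomorphism `T` of `F[t]/(t^m) ⊕ F[t]/(t^m')` is induced by left multiplication by the
matrix `A` on column vectors in `F[t]²`. -/
def IsInducedBy (A : Matrix (Fin 2) (Fin 2) F[X]) (T : Module.End F (PQ F m × PQ F m')) : Prop :=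
  ∀ p q : F[X], T (Submodule.Quotient.mk p, Submodule.Quotient.mk q) =
    (Submodule.Quotient.mk (A 0 0 * p + A 0 1 * q), Submodule.Quotient.mk (A 1 0 * p + A 1 1 * q))

lemma isInducedBy_Mmap (u r : ℕ) (hru : r ≤ u) (a g h b : F[X]) :
    IsInducedBy !![a, X ^ r * g; h, b] (Mmap F u r hru a g h b) :=
  fun _ _ => rfl

namespace IsInducedBy

lemma mul (hS : IsInducedBy A S) (hT : IsInducedBy B T) : IsInducedBy (A * B) (S * T) := by
  intro p q
  rw [Module.End.mul_apply, hT, hS]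
  simp only [Matrix.mul_apply, Fin.sum_univ_two]
  exact Prod.ext (congrArg Submodule.Quotient.mk (by ring))
    (congrArg Submodule.Quotient.mk (by ring))

lemma pow (hT : IsInducedBy A T) (n : ℕ) : IsInducedBy (A ^ n) (T ^ n) := by
  induction n with
  | zero => intro p q; simp
  | succ n ih => simpa only [pow_succ] using ih.mul hT

lemma eq_zero (hT : IsInducedBy A T) (h₀ : ∀ j, X ^ m ∣ A 0 j) (h₁ : ∀ j, X ^ m' ∣ A 1 j) :
    T = 0 := by
  refine LinearMap.ext fun ⟨v, w⟩ => ?_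
  obtain ⟨p, rfl⟩ := Submodule.Quotient.mk_surjective _ v
  obtain ⟨q, rfl⟩ := Submodule.Quotient.mk_surjective _ w
  rw [hT, LinearMap.zero_apply, Prod.mk_eq_zero, PQ_mk_eq_zero_iff, PQ_mk_eq_zero_iff]
  exact ⟨dvd_add ((h₀ 0).mul_right p) ((h₀ 1).mul_right q),
    dvd_add ((h₁ 0).mul_right p) ((h₁ 1).mul_right q)⟩

variable {e : ℕ} {α γ η β : F[X]}

/- If `t^e * (α p + γ q) = 0` in `F[t]/(t^m)`, then `α (η p + β q) = η (α p + γ q) + det * q`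
vanishes in `F[t]/(t^m')`, and `α` is a unit there. -/
lemma ker_eq_ker_fst (hT : IsInducedBy !![X ^ e * α, X ^ e * γ; η, β] T) (hα : α.coeff 0 ≠ 0)
    (hη : X ^ m' ∣ η * X ^ (m - e)) (hdet : X ^ m' ∣ α * β - γ * η) :
    LinearMap.ker T = LinearMap.ker (LinearMap.fst F _ _ ∘ₗ T) := by
  refine le_antisymm (LinearMap.ker_le_ker_comp _ _) fun ⟨v, w⟩ hv => ?_
  obtain ⟨p, rfl⟩ := Submodule.Quotient.mk_surjective _ v
  obtain ⟨q, rfl⟩ := Submodule.Quotient.mk_surjective _ w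
  rw [LinearMap.mem_ker, LinearMap.comp_apply, hT, LinearMap.fst_apply, PQ_mk_eq_zero_iff] at hv
  rw [LinearMap.mem_ker, hT, Prod.mk_eq_zero, PQ_mk_eq_zero_iff, PQ_mk_eq_zero_iff]
  refine ⟨hv, ?_⟩
  have top_factor : X ^ (m - e) ∣ α * p + γ * q := by
    rw [← X_pow_dvd_X_pow_mul_iff]
    simpa [mul_add, mul_assoc] using hv
  have bottom_factor : X ^ m' ∣ α * (η * p + β * q) := by
    have expand : α * (η * p + β * q) = η * (α * p + γ * q) + (α * β - γ * η) * q := by ring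
    rw [expand]
    exact dvd_add (hη.trans (mul_dvd_mul_left η top_factor)) (hdet.mul_right q)
  exact (isCoprime_X_pow_of_coeff_zero_ne_zero hα m').dvd_of_dvd_mul_left bottom_factor

lemma range_fst_comp (hT : IsInducedBy !![X ^ e * α, X ^ e * γ; η, β] T) (he : e ≤ m)
    (hα : α.coeff 0 ≠ 0) :
    LinearMap.range (LinearMap.fst F _ _ ∘ₗ T) =
      LinearMap.range (mulQ F (m - e) m (X ^ e) (X_pow_dvd_mul_X_pow_sub he)) := by
  refine le_antisymm ?_ ?_
  · rintro _ ⟨⟨v, w⟩, rfl⟩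
    obtain ⟨p, rfl⟩ := Submodule.Quotient.mk_surjective _ v
    obtain ⟨q, rfl⟩ := Submodule.Quotient.mk_surjective _ w
    refine ⟨Submodule.Quotient.mk (α * p + γ * q), ?_⟩
    rw [LinearMap.comp_apply, hT, LinearMap.fst_apply]
    exact congrArg Submodule.Quotient.mk (by simp [mul_add, mul_assoc])
  · rintro _ ⟨v, rfl⟩
    obtain ⟨p, rfl⟩ := Submodule.Quotient.mk_surjective _ v
    obtain ⟨c, d, hcd⟩ := isCoprime_X_pow_of_coeff_zero_ne_zero hα m
    refine ⟨(Submodule.Quotient.mk (d * p), Submodule.Quotient.mk 0), ?_⟩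
    rw [LinearMap.comp_apply, hT, LinearMap.fst_apply]
    refine (Submodule.Quotient.eq _).2 (Ideal.mem_span_singleton.2 ⟨-(X ^ e * c * p), ?_⟩)
    simp only [Matrix.of_apply, Matrix.cons_val', Matrix.cons_val_zero, Matrix.cons_val_one,
      Matrix.cons_val_fin_one, LinearMap.mulLeft_apply]
    linear_combination (X : F[X]) ^ e * p * hcd

theorem finrank_ker (hT : IsInducedBy !![X ^ e * α, X ^ e * γ; η, β] T) (he : e ≤ m)
    (hα : α.coeff 0 ≠ 0) (hη : X ^ m' ∣ η * X ^ (m - e)) (hdet : X ^ m' ∣ α * β - γ * η) :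
    Module.finrank F (LinearMap.ker T) = e + m' := by
  have rank_nullity := LinearMap.finrank_range_add_finrank_ker (LinearMap.fst F _ _ ∘ₗ T)
  rw [hT.range_fst_comp he hα, LinearMap.finrank_range_of_inj (mulQ_X_pow_injective he),
    ← hT.ker_eq_ker_fst hα hη hdet, Module.finrank_prod, finrank_PQ, finrank_PQ, finrank_PQ]
    at rank_nullity
  omega

theorem finrank_ker_pow_succ {B : Matrix (Fin 2) (Fin 2) F[X]} {k c : ℕ}
    (hT : IsInducedBy (!![X ^ k, 0; 0, 1] * B * !![1, 0; 0, X ^ c]) T)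
    (hck : c ≤ k) (hkm : k + m' ≤ m) (hdet : X ^ m' ∣ X ^ c * B.det) (n : ℕ)
    (hlead : k + n * c < m → (twistedPow (X ^ (k - c)) B n 0 0).coeff 0 ≠ 0) :
    Module.finrank F (LinearMap.ker (T ^ (n + 1))) = min (k + n * c) m + m' := by
  obtain ⟨d, rfl⟩ := Nat.exists_eq_add_of_le hck
  rw [Nat.add_sub_cancel_left] at hlead
  set P := twistedPow (X ^ d) B n with hP
  have induced : IsInducedBy
      !![X ^ (n * c + (c + d)) * P 0 0, X ^ (n * c + (c + d)) * (X ^ c * P 0 1);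
        X ^ (n * c) * P 1 0, X ^ (n * c + c) * P 1 1] (T ^ (n + 1)) := by
    have h := hT.pow (n + 1)
    rw [pow_add X c d, diag_mul_mul_diag_pow_succ, ← hP, smul_diag_mul_mul_diag] at h
    simpa only [← pow_add, ← pow_mul'] using h
  rw [add_comm (c + d)] at hlead ⊢
  rcases lt_or_ge (n * c + (c + d)) m with hlt | hge
  · have det_P : P 0 0 * P 1 1 - P 0 1 * P 1 0 = (X ^ d) ^ n * B.det ^ (n + 1) := by
      rw [← Matrix.det_fin_two, hP, det_twistedPow]
    have det_eq : P 0 0 * (X ^ (n * c + c) * P 1 1) - X ^ c * P 0 1 * (X ^ (n * c) * P 1 0) =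
        (X ^ c * B.det) ^ (n + 1) * (X ^ d) ^ n := by
      linear_combination X ^ (n * c + c) * det_P
    rw [min_eq_left hlt.le]
    refine induced.finrank_ker hlt.le (hlead hlt) ?_ ?_
    · rw [mul_right_comm, ← pow_add]
      exact (pow_dvd_pow X (by omega)).mul_right _
    · rw [det_eq]
      exact (hdet.trans (dvd_pow_self _ n.succ_ne_zero)).mul_right _
  · have vanish : T ^ (n + 1) = 0 := by
      refine induced.eq_zero (fun j => ?_) (fun j => ?_) <;> fin_cases j <;>
        exact (pow_dvd_pow X (by omega)).mul_right _
    rw [min_eq_right hge, vanish, LinearMap.ker_zero, finrank_top, Module.finrank_prod, finrank_PQ,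
      finrank_PQ]

end IsInducedBy

end InducedEndomorphisms

section JordanType

lemma sum_map_min_arPart {k : ℕ} (hk : 0 < k) (m s : ℕ) :
    ((arPart m k).map fun p => min p s).sum = min (k * s) m := by
  have hm := Nat.div_add_mod m k
  have hlt := Nat.mod_lt m hk
  simp only [arPart, Multiset.map_add, Multiset.map_replicate, Multiset.sum_add,
    Multiset.sum_replicate, smul_eq_mul]
  generalize m / k = q at *
  generalize m % k = t at *
  obtain ⟨w, rfl⟩ := Nat.exists_eq_add_of_le hlt.le
  rw [Nat.add_sub_cancel_left]
  subst hm
  rcases le_or_gt s q with h | h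
  · have := Nat.mul_le_mul_left (t + w) h
    rw [min_eq_right h, min_eq_right (Nat.le_succ_of_le h), min_eq_left (by omega), add_mul]
  · have := Nat.mul_le_mul_left (t + w) h
    rw [Nat.mul_succ] at this
    rw [min_eq_left h.le, min_eq_left h, min_eq_right (by omega)]
    ring

variable {F : Type*} [Field F] {V : Type*} [AddCommGroup V] [Module F V]

lemma jordanTypeIs_arPart_add_replicate_one {B : Module.End F V} {c m l : ℕ} (hc : 0 < c)
    (hB : ∀ n, Module.finrank F (LinearMap.ker (B ^ (n + 1))) = min (c * (n + 1)) m + l) :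
    JordanTypeIs F B (arPart m c + Multiset.replicate l 1) := by
  rintro (_ | n)
  · rw [pow_zero, Module.End.one_eq_id, LinearMap.ker_id, finrank_bot]
    simp
  · rw [hB, Multiset.map_add, Multiset.sum_add, sum_map_min_arPart hc]
    simp

end JordanType

section Coordinates

variable {F : Type*} [Field F] {u r : ℕ}

lemma coeff_sum_fin_C_mul_X_pow_add {R : Type*} [Semiring R] {n : ℕ} (f : Fin n → R) (d j : ℕ) :
    (∑ i : Fin n, C (f i) * X ^ ((i : ℕ) + d)).coeff (j + d) =
      if h : j < n then f ⟨j, h⟩ else 0 := by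
  simp only [finsetSum_coeff, coeff_C_mul_X_pow, Nat.add_right_cancel_iff]
  split_ifs with h
  · rw [Finset.sum_eq_single ⟨j, h⟩ (fun i _ hi => if_neg fun hj => hi (Fin.ext hj.symm)) (by simp)]
    exact if_pos rfl
  · exact Finset.sum_eq_zero fun i _ => if_neg fun hj : j = i => h (hj ▸ i.isLt)

lemma coeff_paOf_zero (x : Vars u r → F) : (paOf F u r x).coeff 0 = 0 := by
  simp [paOf, finsetSum_coeff, coeff_X_pow]

lemma coeff_pbOf_zero (x : Vars u r → F) : (pbOf F u r x).coeff 0 = 0 := by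
  simp [pbOf, finsetSum_coeff, coeff_X_pow]

lemma coeff_paOf_succ (x : Vars u r → F) (i : ℕ) :
    (paOf F u r x).coeff (i + 1) = if h : i < u - 1 then x (Sum.inl ⟨i, h⟩) else 0 :=
  coeff_sum_fin_C_mul_X_pow_add (fun i => x (Sum.inl i)) 1 i

lemma coeff_pbOf_succ (x : Vars u r → F) (i : ℕ) :
    (pbOf F u r x).coeff (i + 1) = if h : i < u - r - 1 then x (Sum.inr (Sum.inl ⟨i, h⟩)) else 0 :=
  coeff_sum_fin_C_mul_X_pow_add (fun i => x (Sum.inr (Sum.inl i))) 1 i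

lemma coeff_pgOf (x : Vars u r → F) (i : ℕ) :
    (pgOf F u r x).coeff i = if h : i < u - r then x (Sum.inr (Sum.inr (Sum.inl ⟨i, h⟩))) else 0 :=
  coeff_sum_fin_C_mul_X_pow_add (fun i => x (Sum.inr (Sum.inr (Sum.inl i)))) 0 i

lemma coeff_phOf (x : Vars u r → F) (i : ℕ) :
    (phOf F u r x).coeff i = if h : i < u - r then x (Sum.inr (Sum.inr (Sum.inr ⟨i, h⟩))) else 0 :=
  coeff_sum_fin_C_mul_X_pow_add (fun i => x (Sum.inr (Sum.inr (Sum.inr i)))) 0 i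

lemma coeff_pbOf_eq_zero_of_le {x : Vars u r → F} {i : ℕ} (hi : u - r ≤ i) :
    (pbOf F u r x).coeff i = 0 := by
  cases i with
  | zero => exact coeff_pbOf_zero x
  | succ i => rw [coeff_pbOf_succ, dif_neg (by omega)]

lemma eval_Av {i : ℕ} (hi : 1 ≤ i) (x : Vars u r → F) :
    MvPolynomial.eval x (Av F u r i) = (paOf F u r x).coeff i := by
  obtain ⟨j, rfl⟩ := Nat.exists_eq_add_of_le' hi
  rw [coeff_paOf_succ, Av, apply_dite (MvPolynomial.eval x)]
  simp only [MvPolynomial.eval_X, map_zero, Nat.add_sub_cancel]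

lemma eval_Bv {i : ℕ} (hi : 1 ≤ i) (x : Vars u r → F) :
    MvPolynomial.eval x (Bv F u r i) = (pbOf F u r x).coeff i := by
  obtain ⟨j, rfl⟩ := Nat.exists_eq_add_of_le' hi
  rw [coeff_pbOf_succ, Bv, apply_dite (MvPolynomial.eval x)]
  simp only [MvPolynomial.eval_X, map_zero, Nat.add_sub_cancel]

lemma eval_Gv (i : ℕ) (x : Vars u r → F) :
    MvPolynomial.eval x (Gv F u r i) = (pgOf F u r x).coeff i := by
  rw [coeff_pgOf, Gv, apply_dite (MvPolynomial.eval x)]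
  simp only [MvPolynomial.eval_X, map_zero]

lemma eval_Hv (i : ℕ) (x : Vars u r → F) :
    MvPolynomial.eval x (Hv F u r i) = (phOf F u r x).coeff i := by
  rw [coeff_phOf, Hv, apply_dite (MvPolynomial.eval x)]
  simp only [MvPolynomial.eval_X, map_zero]

/-- The point of `F^N` whose coordinates are the relevant coefficients of `a`, `b`, `g`, `h`. -/
def pointOf (u r : ℕ) (a b g h : F[X]) : Vars u r → F
  | Sum.inl i => a.coeff (i + 1)
  | Sum.inr (Sum.inl i) => b.coeff (i + 1)
  | Sum.inr (Sum.inr (Sum.inl i)) => g.coeff i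
  | Sum.inr (Sum.inr (Sum.inr i)) => h.coeff i

variable {a b g h : F[X]}

lemma paOf_pointOf (ha₀ : a.coeff 0 = 0) (ha : a.natDegree < u) :
    paOf F u r (pointOf u r a b g h) = a := by
  ext (_ | i)
  · rw [coeff_paOf_zero, ha₀]
  · rw [coeff_paOf_succ]
    split_ifs with hi
    · rfl
    · exact (coeff_eq_zero_of_natDegree_lt (by omega)).symm

lemma pbOf_pointOf (hb₀ : b.coeff 0 = 0) (hb : b.natDegree < u - r) :
    pbOf F u r (pointOf u r a b g h) = b := by
  ext (_ | i)
  · rw [coeff_pbOf_zero, hb₀]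
  · rw [coeff_pbOf_succ]
    split_ifs with hi
    · rfl
    · exact (coeff_eq_zero_of_natDegree_lt (by omega)).symm

lemma pgOf_pointOf (hg : g.natDegree < u - r) : pgOf F u r (pointOf u r a b g h) = g := by
  ext i
  rw [coeff_pgOf]
  split_ifs with hi
  · rfl
  · exact (coeff_eq_zero_of_natDegree_lt (by omega)).symm

lemma phOf_pointOf (hh : h.natDegree < u - r) : phOf F u r (pointOf u r a b g h) = h := by
  ext i
  rw [coeff_phOf]
  split_ifs with hi
  · rfl
  · exact (coeff_eq_zero_of_natDegree_lt (by omega)).symm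

end Coordinates

section Locus

variable {F : Type*} [Field F] {u r k : ℕ}

lemma mem_zLocus_Av_iff {x : Vars u r → F} :
    x ∈ zLocus F u r {p | ∃ i, 1 ≤ i ∧ i ≤ k - 1 ∧ p = Av F u r i} ↔
      ∀ i < k, (paOf F u r x).coeff i = 0 := by
  constructor
  · rintro h (_ | i) hi
    · exact coeff_paOf_zero x
    · rw [← eval_Av i.succ_pos]
      exact h _ ⟨i + 1, i.succ_pos, Nat.le_sub_one_of_lt hi, rfl⟩
  · rintro h _ ⟨i, hi₁, hik, rfl⟩
    rw [eval_Av hi₁]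
    exact h i (by omega)

lemma mem_zLocus_Bv_iff {l : ℕ} {x : Vars u r → F} :
    x ∈ zLocus F u r {p | ∃ i, 1 ≤ i ∧ i ≤ l - 1 ∧ p = Bv F u r i} ↔
      ∀ i < l, (pbOf F u r x).coeff i = 0 := by
  constructor
  · rintro h (_ | i) hi
    · exact coeff_pbOf_zero x
    · rw [← eval_Bv i.succ_pos]
      exact h _ ⟨i + 1, i.succ_pos, Nat.le_sub_one_of_lt hi, rfl⟩
  · rintro h _ ⟨i, hi₁, hil, rfl⟩
    rw [eval_Bv hi₁]
    exact h i (by omega)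

lemma zLocus_union (S T : Set (MvPolynomial (Vars u r) F)) :
    zLocus F u r (S ∪ T) = zLocus F u r S ∩ zLocus F u r T := by
  ext x
  simp only [zLocus, Set.mem_union, or_imp, forall_and]
  rfl

lemma eval_quadratic (hk : 1 ≤ k) (hkr : k < r) (m : ℕ) (x : Vars u r → F) :
    MvPolynomial.eval x
        ((∑ j ∈ Finset.range (m + 1), Av F u r (k + j) * Bv F u r (r - k + m - j)) -
          ∑ j ∈ Finset.range (m + 1), Gv F u r j * Hv F u r (m - j)) =
      ∑ j ∈ Finset.range (m + 1), (paOf F u r x).coeff (k + j) *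
          (pbOf F u r x).coeff (r - k + m - j) -
        ∑ j ∈ Finset.range (m + 1), (pgOf F u r x).coeff j * (phOf F u r x).coeff (m - j) := by
  simp only [map_sub, map_sum, map_mul, eval_Gv, eval_Hv]
  congr 1
  refine Finset.sum_congr rfl fun j hj => ?_
  rw [Finset.mem_range] at hj
  rw [eval_Av (by omega), eval_Bv (by omega)]

lemma mem_Xlocus_iff_coeff (hk : 1 ≤ k) (hkr : k < r) {x : Vars u r → F} :
    x ∈ Xlocus F u r k (u - r) ↔
      (∀ i < k, (paOf F u r x).coeff i = 0) ∧ (∀ i < r - k, (pbOf F u r x).coeff i = 0) ∧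
      ∀ m < k + (u - r) - r,
        ∑ j ∈ Finset.range (m + 1), (paOf F u r x).coeff (k + j) *
            (pbOf F u r x).coeff (r - k + m - j) =
          ∑ j ∈ Finset.range (m + 1), (pgOf F u r x).coeff j * (phOf F u r x).coeff (m - j) := by
  unfold Xlocus Eset
  split_ifs with hsmall
  · rw [zLocus_union, Set.mem_inter_iff, mem_zLocus_Av_iff, mem_zLocus_Bv_iff]
    refine and_congr_right fun _ => ⟨fun h => ⟨fun i _ => ?_, fun m hm => ?_⟩,
      fun h i hi => h.1 i (by omega)⟩
    · exact (lt_or_ge i (u - r)).elim (h i) coeff_pbOf_eq_zero_of_le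
    · omega
  · rw [zLocus_union, zLocus_union, Set.mem_inter_iff, Set.mem_inter_iff, and_assoc,
      mem_zLocus_Av_iff, mem_zLocus_Bv_iff]
    refine and_congr_right fun _ => and_congr_right fun _ => ⟨fun h m hm => ?_, ?_⟩
    · rw [← sub_eq_zero, ← eval_quadratic hk hkr]
      exact h _ ⟨m, by omega, rfl⟩
    · rintro h _ ⟨m, hm, rfl⟩
      rw [eval_quadratic hk hkr, sub_eq_zero]
      exact h m (by omega)

lemma mem_Xlocus_iff (hk : 1 ≤ k) (hkr : k < r) {x : Vars u r → F} :
    x ∈ Xlocus F u r k (u - r) ↔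
      X ^ k ∣ paOf F u r x ∧ X ^ (r - k) ∣ pbOf F u r x ∧
      X ^ (k + (u - r)) ∣ paOf F u r x * pbOf F u r x - X ^ r * pgOf F u r x * phOf F u r x := by
  rw [mem_Xlocus_iff_coeff hk hkr, ← X_pow_dvd_iff, ← X_pow_dvd_iff]
  refine and_congr_right fun ⟨a, ha⟩ => and_congr_right fun ⟨b, hb⟩ => ?_
  have factor : paOf F u r x * pbOf F u r x - X ^ r * pgOf F u r x * phOf F u r x =
      X ^ r * (a * b - pgOf F u r x * phOf F u r x) := by
    have split_power : (X : F[X]) ^ r = X ^ k * X ^ (r - k) := by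
      rw [← pow_add, Nat.add_sub_cancel' hkr.le]
    rw [ha, hb, split_power]
    ring
  rw [factor, X_pow_dvd_X_pow_mul_iff, X_pow_dvd_iff]
  refine forall₂_congr fun m _ => ?_
  rw [coeff_sub, sub_eq_zero, coeff_mul, coeff_mul,
    Finset.Nat.sum_antidiagonal_eq_sum_range_succ_mk,
    Finset.Nat.sum_antidiagonal_eq_sum_range_succ_mk]
  refine Eq.congr_left (Finset.sum_congr rfl fun j hj => ?_)
  rw [ha, hb, add_comm k j, coeff_X_pow_mul,
    Nat.add_sub_assoc (Nat.lt_succ_iff.1 (Finset.mem_range.1 hj)), add_comm (r - k),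
    coeff_X_pow_mul]

end Locus

section ZariskiClosed

variable {F : Type*} [Field F] {u r : ℕ}

lemma isZClosed_finset_zeros {ι : Type*} (s : Finset ι) (f : ι → MvPolynomial (Vars u r) F) :
    IsZClosed F u r {x | ∃ i ∈ s, MvPolynomial.eval x (f i) = 0} := by
  refine ⟨{∏ i ∈ s, f i}, Set.ext fun x => ?_⟩
  simp [zLocus, map_prod, Finset.prod_eq_zero_iff]

end ZariskiClosed

section GenericLocus

variable {F : Type*} [Field F] {u r k c : ℕ}

/-- For `a = t^k a'` and `b = t^c b'`, the value at `t = 0` of the matrix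
`!![a', t^(r-k-c) * g; h, b']` attached to the point `x`. -/
noncomputable def leadMatrix (r k c : ℕ) (x : Vars u r → F) : Matrix (Fin 2) (Fin 2) F :=
  !![(paOf F u r x).coeff k, 0 ^ (r - k - c) * (pgOf F u r x).coeff 0;
    (phOf F u r x).coeff 0, (pbOf F u r x).coeff c]

variable (F u r k c) in
/-- The polynomial function on `F^N` giving the upper left entry of the `n`-th twisted power of
`leadMatrix r k c`. -/
noncomputable def leadPoly (n : ℕ) : MvPolynomial (Vars u r) F :=
  twistedPow (0 ^ (k - c))
    !![Av F u r k, 0 ^ (r - k - c) * Gv F u r 0; Hv F u r 0, Bv F u r c] n 0 0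

lemma eval_leadPoly (hk : 1 ≤ k) (hc : 1 ≤ c) (n : ℕ) (x : Vars u r → F) :
    MvPolynomial.eval x (leadPoly F u r k c n) =
      twistedPow (0 ^ (k - c)) (leadMatrix r k c x) n 0 0 := by
  have map_lead :
      (!![Av F u r k, 0 ^ (r - k - c) * Gv F u r 0; Hv F u r 0, Bv F u r c]).map
        (MvPolynomial.eval x) = leadMatrix r k c x := by
    ext i j
    fin_cases i <;> fin_cases j <;>
      simp [leadMatrix, eval_Av hk, eval_Bv hc, eval_Gv, eval_Hv]
  rw [leadPoly, ← Matrix.map_apply (f := MvPolynomial.eval x), map_twistedPow, map_lead, map_pow,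
    map_zero]

variable (F u r k c) in
/-- The points `x` such that, for `x` in `X^Q_{k,u-r}`, the upper left entry of `M_x ^ (n + 1)` is
exactly divisible by `t^(k + n * c)` whenever this power is nonzero in `F[t]/(t^u)`. -/
def genericLocus : Set (Vars u r → F) :=
  {x | ∀ n, k + n * c < u → twistedPow (0 ^ (k - c)) (leadMatrix r k c x) n 0 0 ≠ 0}

lemma isZClosed_compl_genericLocus (hk : 1 ≤ k) (hc : 1 ≤ c) :
    IsZClosed F u r (genericLocus F u r k c)ᶜ := by
  convert isZClosed_finset_zeros ((Finset.range u).filter fun n => k + n * c < u)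
    (leadPoly F u r k c) using 1
  ext x
  have bound (n : ℕ) (h : k + n * c < u) : n < u :=
    (Nat.le_mul_of_pos_right n hc).trans_lt (by omega)
  simp only [genericLocus, Set.mem_compl_iff, Set.mem_ofPred_eq, not_forall, not_not,
    Finset.mem_filter, Finset.mem_range, eval_leadPoly hk hc, exists_prop]
  exact exists_congr fun n => and_congr_left fun _ => ⟨fun h => ⟨bound n h, h⟩, And.right⟩

lemma nonempty_Xlocus_inter_genericLocus (hru : r < u) (hk : 1 ≤ k) (hkr : k < r)
    {b : F[X]} {g h : F} (hb_dvd : X ^ (r - k) ∣ b) (hb_deg : b.natDegree < u - r)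
    (hdet : X ^ (k + (u - r)) ∣ X ^ k * b - X ^ r * C g * C h)
    (hgen : ∀ n, k + n * c < u →
      twistedPow (0 ^ (k - c)) !![1, 0 ^ (r - k - c) * g; h, b.coeff c] n 0 0 ≠ 0) :
    (Xlocus F u r k (u - r) ∩ genericLocus F u r k c).Nonempty := by
  set x : Vars u r → F := pointOf u r (X ^ k) b (C g) (C h)
  have hX₀ : (X ^ k : F[X]).coeff 0 = 0 := by rw [coeff_X_pow, if_neg (by omega)]
  have hX_deg : (X ^ k : F[X]).natDegree < u := by rw [natDegree_X_pow]; omega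
  have hb₀ : b.coeff 0 = 0 := X_pow_dvd_iff.1 hb_dvd 0 (by omega)
  have hC_deg (s : F) : (C s).natDegree < u - r := by rw [natDegree_C]; omega
  have ha : paOf F u r x = X ^ k := paOf_pointOf hX₀ hX_deg
  have hb : pbOf F u r x = b := pbOf_pointOf hb₀ hb_deg
  have hg : pgOf F u r x = C g := pgOf_pointOf (hC_deg g)
  have hh : phOf F u r x = C h := phOf_pointOf (hC_deg h)
  refine ⟨x, ?_, fun n hn => ?_⟩
  · rw [mem_Xlocus_iff hk hkr, ha, hb, hg, hh]
    exact ⟨dvd_rfl, hb_dvd, hdet⟩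
  · rw [leadMatrix, ha, hb, hg, hh, coeff_X_pow_self, coeff_C_zero, coeff_C_zero]
    exact hgen n hn

lemma nonempty_Xlocus_inter_genericLocus_of_two_mul_le (hru : r < u) (hk : 1 ≤ k)
    (h2k : 2 * k ≤ r) : (Xlocus F u r k (u - r) ∩ genericLocus F u r k k).Nonempty := by
  refine nonempty_Xlocus_inter_genericLocus hru hk (by omega) (b := 0) (g := 0) (h := 0)
    (dvd_zero _) (by simpa using hru) (by simp) fun n _ => ?_
  rw [mul_zero, coeff_zero, twistedPow_diag_apply_zero_zero]
  simp

-- With `g = h = 1`, the determinant `t^k b - t^r` vanishes for `b = t^(r-k)` and is `-t^r` for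
-- `b = 0`; the latter is needed when `t^(r-k)` vanishes in `F[t]/(t^(u-r))`.
lemma nonempty_Xlocus_inter_genericLocus_of_lt_two_mul (hru : r < u) (hkr : k < r)
    (h2k : r < 2 * k) : (Xlocus F u r k (u - r) ∩ genericLocus F u r k (r - k)).Nonempty := by
  have lead_ne_zero {s : F} {n : ℕ} (hs : s ^ (n - 1) ≠ 0) :
      twistedPow (0 ^ (k - (r - k))) !![1, 0 ^ (r - k - (r - k)) * 1; 1, s] n 0 0 ≠ 0 := by
    rw [zero_pow (by omega), Nat.sub_self, pow_zero, one_mul]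
    cases n with
    | zero => simp [twistedPow]
    | succ n => simpa [twistedPow_zero_succ_apply_zero_zero] using hs
  rcases lt_or_ge (r - k) (u - r) with hlt | hge
  · refine nonempty_Xlocus_inter_genericLocus hru (by omega) hkr (b := X ^ (r - k)) (g := 1)
      (h := 1) dvd_rfl (by rwa [natDegree_X_pow]) ?_ fun n _ => lead_ne_zero (by simp)
    simp [← pow_add, Nat.add_sub_cancel' hkr.le]
  · refine nonempty_Xlocus_inter_genericLocus hru (by omega) hkr (b := 0) (g := 1) (h := 1)
      (dvd_zero _) (by simpa using hru) ?_ fun n hn => lead_ne_zero ?_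
    · simpa using pow_dvd_pow X (by omega)
    · have hn₁ : n ≤ 1 := by
        by_contra! hn₂
        have := Nat.mul_le_mul_right (r - k) hn₂
        omega
      simp [Nat.sub_eq_zero_of_le hn₁]

lemma exists_isInducedBy_Mx (hru : r < u) (hk : 1 ≤ k) (hkr : k < r) (hcr : c ≤ r - k)
    {x : Vars u r → F} (hx : x ∈ Xlocus F u r k (u - r)) :
    ∃ B : Matrix (Fin 2) (Fin 2) F[X],
      IsInducedBy (!![X ^ k, 0; 0, 1] * B * !![1, 0; 0, X ^ c]) (Mx F u r hru.le x) ∧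
      X ^ (u - r) ∣ X ^ c * B.det ∧ B.map constantCoeff = leadMatrix r k c x := by
  obtain ⟨⟨a, ha⟩, hb, hdet⟩ := (mem_Xlocus_iff hk hkr).1 hx
  obtain ⟨b, hb⟩ := (pow_dvd_pow X hcr).trans hb
  have split_power : (X : F[X]) ^ r = X ^ k * X ^ c * X ^ (r - k - c) := by
    rw [← pow_add, ← pow_add]
    congr 1
    omega
  refine ⟨!![a, X ^ (r - k - c) * pgOf F u r x; phOf F u r x, b], ?_, ?_, ?_⟩
  · rw [Mx, ← one_smul F[X] (_ * _ * _), smul_diag_mul_mul_diag]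
    simpa only [one_mul, Matrix.of_apply, Matrix.cons_val', Matrix.cons_val_zero,
      Matrix.cons_val_one, Matrix.cons_val_fin_one, ← mul_assoc, ← split_power, ← ha, ← hb]
      using isInducedBy_Mmap u r hru.le _ _ _ _
  · have factor : paOf F u r x * pbOf F u r x - X ^ r * pgOf F u r x * phOf F u r x =
        X ^ k * (X ^ c * (a * b - X ^ (r - k - c) * pgOf F u r x * phOf F u r x)) := by
      rw [ha, hb, split_power]
      ring
    rwa [factor, X_pow_dvd_X_pow_mul_iff, Nat.add_sub_cancel_left, ← Matrix.det_fin_two_of] at hdet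
  · have hak : (paOf F u r x).coeff k = constantCoeff a := by
      simpa [ha, constantCoeff_apply] using coeff_X_pow_mul a k 0
    have hbc : (pbOf F u r x).coeff c = constantCoeff b := by
      simpa [hb, constantCoeff_apply] using coeff_X_pow_mul b c 0
    have map_X : constantCoeff (X : F[X]) = 0 := coeff_X_zero
    ext i j
    fin_cases i <;> fin_cases j <;>
      simp [leadMatrix, hak, hbc, map_X, ← constantCoeff_apply]

lemma finrank_ker_Mx_pow_succ (hru : r < u) (hk : 1 ≤ k) (hkr : k < r) (hck : c ≤ k)
    (hcr : c ≤ r - k) {x : Vars u r → F} (hx : x ∈ Xlocus F u r k (u - r))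
    (hgen : x ∈ genericLocus F u r k c) (n : ℕ) :
    Module.finrank F (LinearMap.ker (Mx F u r hru.le x ^ (n + 1))) =
      min (k + n * c) u + (u - r) := by
  obtain ⟨B, hB, hdet, map_B⟩ := exists_isInducedBy_Mx hru hk hkr hcr hx
  refine hB.finrank_ker_pow_succ hck (by omega) hdet n fun hn => ?_
  have map_X : constantCoeff (X : F[X]) = 0 := coeff_X_zero
  rw [← constantCoeff_apply, ← Matrix.map_apply (f := constantCoeff), map_twistedPow, map_B,
    map_pow, map_X]
  exact hgen n hn

lemma jordanTypeIs_Mx (hru : r < u) (hk : 1 ≤ k) (hkr : k < r) (hc : 1 ≤ c) (hck : c ≤ k)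
    (hcr : c ≤ r - k) {x : Vars u r → F} (hx : x ∈ Xlocus F u r k (u - r))
    (hgen : x ∈ genericLocus F u r k c) :
    JordanTypeIs F (Mx F u r hru.le x)
      (arPart (u + c - k) c + Multiset.replicate (u - r + (k - c)) 1) := by
  refine jordanTypeIs_arPart_add_replicate_one hc fun n => ?_
  rw [finrank_ker_Mx_pow_succ hru hk hkr hck hcr hx hgen, Nat.mul_succ, mul_comm n c]
  omega

end GenericLocus

theorem statement8_general (F : Type*) [Field F] (u r k : ℕ)
    (hru : r < u) (hk1 : 1 ≤ k) (hkr : k < r) :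
    ∃ U : Set (Vars u r → F), U.Nonempty ∧
      (∃ C, IsZClosed F u r C ∧ U = Xlocus F u r k (u - r) ∩ Cᶜ) ∧
      ∀ x ∈ U, JordanTypeIs F (Mx F u r hru.le x)
        (if 2 * k ≤ r then arPart u k + Multiset.replicate (u - r) 1
         else arPart (u + r - 2 * k) (r - k) + Multiset.replicate (u + 2 * k - 2 * r) 1) := by
  have open_part {c : ℕ} (hc : 1 ≤ c) : ∃ C, IsZClosed F u r C ∧
      Xlocus F u r k (u - r) ∩ genericLocus F u r k c = Xlocus F u r k (u - r) ∩ Cᶜ :=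
    ⟨_, isZClosed_compl_genericLocus hk1 hc, by rw [compl_compl]⟩
  split_ifs with h2k
  · refine ⟨_, nonempty_Xlocus_inter_genericLocus_of_two_mul_le hru hk1 h2k, open_part hk1,
      fun x hx => ?_⟩
    simpa using jordanTypeIs_Mx hru hk1 hkr hk1 le_rfl (by omega) hx.1 hx.2
  · rw [not_le] at h2k
    refine ⟨_, nonempty_Xlocus_inter_genericLocus_of_lt_two_mul hru hkr h2k,
      open_part (by omega), fun x hx => ?_⟩
    convert jordanTypeIs_Mx hru hk1 hkr (by omega) (by omega) le_rfl hx.1 hx.2 using 3 <;> omega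

/-- There is a nonempty subset `U` of `X^Q_{k,u−r}`, open in the Zariski
subspace topology of `X^Q_{k,u−r} ⊆ F^N`, on which the Jordan type of `M_x` is
`([u]^k, 1^{u−r})` if `2k ≤ r` and `([u+r−2k]^{r−k}, 1^{u+2k−2r})` if `2k > r`. -/
theorem statement8 (F : Type*) [Field F] [Infinite F] (u r k : ℕ)
    (hru : r < u) (hr : 2 ≤ r) (hk1 : 1 ≤ k) (hk2 : k ≤ r - 1) :
    ∃ U : Set (Vars u r → F), U.Nonempty ∧
      (∃ C, IsZClosed F u r C ∧ U = Xlocus F u r k (u - r) ∩ Cᶜ) ∧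
      ∀ x ∈ U, JordanTypeIs F (Mx F u r hru.le x)
        (if 2 * k ≤ r then arPart u k + Multiset.replicate (u - r) 1
         else arPart (u + r - 2 * k) (r - k) + Multiset.replicate (u + 2 * k - 2 * r) 1) :=
  statement8_general F u r k hru hk1 (by omega)
end

section
/- Let u > r ≥ 2 be integers and 1 ≤ k ≤ r−1. If 2k ≤ r, then the Burge code of the partition ([u]^k, 1^{u−r}) is β^{u−r} α^{r−k} β^{k} α. If 2k > r, then the Burge code of the partition ([u+r−2k]^{r−k}, 1^{u+2k−2r}) is β^{u−r} α^{r−k} β^{k} α. -/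
open Polynomial

/-!
If `k ≤ m` and every part of `Q` is smaller than every part of `[m]^k`, then the backward pairs
of `([m+1]^k, Q)` are one pair at the top of `[m+1]^k` together with those of `Q`, so
`∂([m+1]^k, Q) = ([m]^k, ∂Q)` and the class is that of `Q`. With `Q = 1^b` this peels off one
`β` and one part `1` at a time; with `Q` empty it peels off an `α`. Both partitions
of the theorem reach `[r]^k` after `u - r` letters `β`: in the second case because
`(2^{r-k}, 1^{2k-r}) = [r]^k`. From there `r - k` letters `α` lead to `[k]^k = 1^k`, whose code
is `β^k α`.
-/

section Rset

variable {f g : ℕ → ℕ} {P : Multiset ℕ} {j m n : ℕ}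

lemma RsetGo_congr (h : ∀ i, 0 < i → i ≤ n → f i = g i) : RsetGo f n = RsetGo g n := by
  fun_induction RsetGo g n with
  | case1 => rfl
  | case2 => simp_all [RsetGo]
  | case3 => simp_all [RsetGo]
  | case4 j hj ih =>
    rw [RsetGo, h (j + 2) (by omega) le_rfl, if_pos hj, ih fun i h₀ hi => h i h₀ (by omega)]
  | case5 j hj ih =>
    rw [RsetGo, h (j + 2) (by omega) le_rfl, if_neg hj, ih fun i h₀ hi => h i h₀ (by omega)]

lemma RsetGo_succ_of_eq_zero (h : f (n + 1) = 0) : RsetGo f (n + 1) = RsetGo f n := by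
  cases n <;> simp [RsetGo, h]

lemma RsetGo_eq_of_le (hmn : m ≤ n) (h : ∀ i, m < i → i ≤ n → f i = 0) :
    RsetGo f n = RsetGo f m := by
  induction n, hmn using Nat.le_induction with
  | base => rfl
  | succ n hmn ih =>
    rw [RsetGo_succ_of_eq_zero (h (n + 1) (by omega) le_rfl), ih fun i hi hin => h i hi (by omega)]

lemma RsetGo_of_pos (hn : 0 < n) (hf : 0 < f n) : RsetGo f n = insert n (RsetGo f (n - 2)) := by
  match n with
  | 1 => simp [RsetGo, hf]
  | n + 2 => simp [RsetGo, hf]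

lemma pos_of_mem_RsetGo (h : j ∈ RsetGo f n) : 0 < j ∧ 0 < f j := by
  fun_induction RsetGo f n <;> aesop

lemma pos_of_mem_Rset (h : j ∈ Rset P) : 0 < j :=
  (pos_of_mem_RsetGo h).1

lemma mem_of_mem_Rset (h : j ∈ Rset P) : j ∈ P :=
  Multiset.count_pos.mp (pos_of_mem_RsetGo h).2

lemma Rset_val_le (P : Multiset ℕ) : (Rset P).val ≤ P :=
  (Multiset.le_iff_subset (Rset P).nodup).mpr fun _ => mem_of_mem_Rset

lemma Rset_zero : Rset 0 = ∅ := rfl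

lemma RsetGo_count (P : Multiset ℕ) (n : ℕ) :
    RsetGo (fun j => P.count j) n = Rset (P.filter (· ≤ n)) := by
  have hsup : (P.filter (· ≤ n)).sup ≤ n :=
    Multiset.sup_le.mpr fun _ hi => (Multiset.mem_filter.mp hi).2
  calc
    _ = RsetGo (fun j => (P.filter (· ≤ n)).count j) n :=
      RsetGo_congr fun i _ hi => (Multiset.count_filter_of_pos (p := (· ≤ n)) hi).symm
    _ = Rset (P.filter (· ≤ n)) :=
      RsetGo_eq_of_le hsup fun i hi _ =>
        Multiset.count_eq_zero.mpr fun hmem => hi.not_ge (Multiset.le_sup hmem)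

lemma Rset_eq_insert (hn : 0 < n) (hmem : n ∈ P) (hle : ∀ j ∈ P, j ≤ n) :
    Rset P = insert n (Rset (P.filter (· ≤ n - 2))) := by
  have hsup : P.sup = n := le_antisymm (Multiset.sup_le.mpr hle) (Multiset.le_sup hmem)
  rw [Rset, hsup, RsetGo_of_pos hn (Multiset.count_pos.mpr hmem), RsetGo_count]

lemma Rset_nonempty (hP : P ≠ 0) (h0 : 0 ∉ P) : (Rset P).Nonempty := by
  obtain ⟨n, hmem, hle⟩ := P.toFinset.exists_max_image id (by simpa using hP)
  simp only [Multiset.mem_toFinset, id] at hmem hle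
  rw [Rset_eq_insert (Nat.pos_of_ne_zero fun h => h0 (h ▸ hmem)) hmem hle]
  exact Finset.insert_nonempty _ _

lemma Rset_replicate_one (b : ℕ) : Rset (Multiset.replicate (b + 1) 1) = {1} := by
  have hnil : (Multiset.replicate (b + 1) 1).filter (· ≤ 1 - 2) = 0 :=
    Multiset.filter_eq_nil.mpr fun j hj => by simp [Multiset.eq_of_mem_replicate hj]
  rw [Rset_eq_insert one_pos (by simp) fun j hj => (Multiset.eq_of_mem_replicate hj).le, hnil,
    Rset_zero, insert_empty_eq]

end Rset

section Derivative

variable {P : Multiset ℕ}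

lemma sum_filter_pos (P : Multiset ℕ) : (P.filter (0 < ·)).sum = P.sum := by
  induction P using Multiset.induction_on with
  | empty => rfl
  | cons a P ih => rcases a.eq_zero_or_pos with rfl | ha <;> simp_all

lemma sum_dP_add_card_Rset (P : Multiset ℕ) : (dP P).sum + (Rset P).card = P.sum := by
  have hpred : ((Rset P).val.map (· - 1)).sum + (Rset P).card = (Rset P).val.sum := by
    calc
      _ = ∑ j ∈ Rset P, (j - 1 + 1) := by
        rw [Finset.sum_add_distrib, Finset.card_eq_sum_ones]; rfl
      _ = ∑ j ∈ Rset P, j :=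
        Finset.sum_congr rfl fun j hj => Nat.sub_add_cancel (pos_of_mem_Rset hj)
      _ = (Rset P).val.sum := Finset.sum_val _ |>.symm
  rw [dP, Multiset.sum_add, sum_filter_pos, add_assoc, hpred, ← Multiset.sum_add,
    tsub_add_cancel_of_le (Rset_val_le P)]

lemma sum_dP_lt (hP : P ≠ 0) (h0 : 0 ∉ P) : (dP P).sum < P.sum := by
  have := (Rset_nonempty hP h0).card_pos
  have := sum_dP_add_card_Rset P
  omega

lemma zero_notMem_dP (h0 : 0 ∉ P) : 0 ∉ dP P := by
  simp only [dP, Multiset.mem_add, Multiset.mem_filter, lt_irrefl, and_false, or_false]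
  exact fun h => h0 (Multiset.mem_of_le tsub_le_self h)

lemma dP_zero : dP 0 = 0 := rfl

lemma dP_replicate_one (b : ℕ) :
    dP (Multiset.replicate (b + 1) 1) = Multiset.replicate b 1 := by
  rw [dP, Rset_replicate_one, Multiset.replicate_succ]
  simp [Multiset.filter_singleton]

end Derivative

section BurgeCode

variable {P : Multiset ℕ} {m n : ℕ}

lemma burgeGo_eq_burgeGo (h0 : 0 ∉ P) (hm : P.sum < m) (hn : P.sum < n) :
    burgeGo m P = burgeGo n P := by
  induction m generalizing n P with
  | zero => omega
  | succ m ih =>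
    obtain ⟨n, rfl⟩ := Nat.exists_eq_add_one_of_ne_zero (Nat.ne_zero_of_lt hn)
    by_cases hP : P = 0
    · simp only [burgeGo, if_pos hP]
    · have hlt := sum_dP_lt hP h0
      simp only [burgeGo, if_neg hP]
      rw [ih (n := n) (zero_notMem_dP h0) (by omega) (by omega)]

lemma burgeCode_zero : burgeCode 0 = [false] := rfl

lemma burgeCode_eq_cons (hP : P ≠ 0) (h0 : 0 ∉ P) :
    burgeCode P = decide (1 ∈ Rset P) :: burgeCode (dP P) := by
  rw [burgeCode, burgeGo, if_neg hP,
    burgeGo_eq_burgeGo (zero_notMem_dP h0) (sum_dP_lt hP h0) (Nat.lt_succ_self _), burgeCode]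
  by_cases h : 1 ∈ Rset P <;> simp [h]

lemma burgeCode_replicate_one (b : ℕ) :
    burgeCode (Multiset.replicate b 1) = List.replicate b true ++ [false] := by
  induction b with
  | zero => exact burgeCode_zero
  | succ b ih =>
    rw [burgeCode_eq_cons (by simp [Multiset.replicate_succ]) (by simp [Multiset.mem_replicate]),
      Rset_replicate_one, dP_replicate_one, ih]
    simp [List.replicate_succ]

end BurgeCode

section AlmostRectangular

variable {Q : Multiset ℕ} {j k m : ℕ}

lemma arPart_mul_add (a : ℕ) {c : ℕ} (hk : 0 < k) (hc : c ≤ k) :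
    arPart (k * a + c) k = Multiset.replicate c (a + 1) + Multiset.replicate (k - c) a := by
  rcases hc.lt_or_eq with hlt | rfl
  · simp [arPart, Nat.mul_add_div hk, Nat.div_eq_of_lt hlt, Nat.mod_eq_of_lt hlt]
  · simp [arPart, ← mul_add_one, Nat.mul_div_cancel_left _ hk]

lemma eq_or_eq_of_mem_arPart (h : j ∈ arPart m k) : j = m / k + 1 ∨ j = m / k :=
  (Multiset.mem_add.mp h).imp Multiset.eq_of_mem_replicate Multiset.eq_of_mem_replicate

lemma div_mem_arPart (m : ℕ) (hk : 0 < k) : m / k ∈ arPart m k :=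
  Multiset.mem_add.mpr <| .inr <|
    Multiset.mem_replicate.mpr ⟨Nat.sub_ne_zero_of_lt (Nat.mod_lt m hk), rfl⟩

lemma zero_notMem_arPart (hk : 0 < k) (hkm : k ≤ m) : 0 ∉ arPart m k := fun h => by
  have := Nat.div_pos hkm hk
  have := eq_or_eq_of_mem_arPart h
  omega

lemma arPart_succ (m : ℕ) (hk : 0 < k) :
    arPart (m + 1) k = (m / k + 1) ::ₘ (arPart m k).erase (m / k) := by
  have hlt := Nat.mod_lt m hk
  obtain ⟨z, hz⟩ : ∃ z, k - m % k = z + 1 := ⟨k - m % k - 1, by omega⟩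
  have hm : arPart m k =
      (m / k) ::ₘ (Multiset.replicate (m % k) (m / k + 1) + Multiset.replicate z (m / k)) := by
    rw [arPart, hz, Multiset.replicate_succ, Multiset.add_cons]
  have hm_succ : arPart (m + 1) k =
      Multiset.replicate (m % k + 1) (m / k + 1) + Multiset.replicate z (m / k) := by
    conv_lhs => rw [← Nat.div_add_mod m k, add_assoc]
    rw [arPart_mul_add (m / k) hk hlt, show k - (m % k + 1) = z by omega]
  rw [hm, Multiset.erase_cons_head, hm_succ, Multiset.replicate_succ, Multiset.cons_add]

lemma arPart_self (hk : 0 < k) : arPart k k = Multiset.replicate k 1 := by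
  simpa using arPart_mul_add 1 hk (Nat.zero_le k)

lemma arPart_two_mul (hk : 0 < k) : arPart (2 * k) k = Multiset.replicate k 2 := by
  simpa [mul_comm] using arPart_mul_add 2 hk (Nat.zero_le k)

lemma arPart_add_replicate_one (b : ℕ) (hk : 0 < k) :
    arPart (2 * k) k + Multiset.replicate b 1 = arPart (2 * k + b) (k + b) := by
  rw [arPart_two_mul hk, show 2 * k + b = (k + b) * 1 + k by ring,
    arPart_mul_add 1 (by omega) (Nat.le_add_right k b), Nat.add_sub_cancel_left]

lemma eq_or_eq_of_mem_arPart_succ (hk : 0 < k) (h : j ∈ arPart (m + 1) k) :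
    j = m / k + 1 ∨ j = m / k := by
  rw [arPart_succ m hk, Multiset.mem_cons] at h
  exact h.elim .inl fun h => eq_or_eq_of_mem_arPart (Multiset.mem_of_mem_erase h)

lemma Rset_arPart_succ_add (hk : 0 < k) (hkm : k ≤ m) (hQ : ∀ j ∈ Q, j < m / k) :
    Rset (arPart (m + 1) k + Q) = insert (m / k + 1) (Rset Q) := by
  have hpos : 0 < m / k := Nat.div_pos hkm hk
  have htop : m / k + 1 ∈ arPart (m + 1) k + Q := by simp [arPart_succ m hk]
  have hle : ∀ j ∈ arPart (m + 1) k + Q, j ≤ m / k + 1 := fun j hj => by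
    have := (Multiset.mem_add.mp hj).imp (eq_or_eq_of_mem_arPart_succ hk) (hQ j)
    omega
  have hnil : (arPart (m + 1) k).filter (· ≤ m / k + 1 - 2) = 0 :=
    Multiset.filter_eq_nil.mpr fun j hj => by
      have := eq_or_eq_of_mem_arPart_succ hk hj
      omega
  have hself : Q.filter (· ≤ m / k + 1 - 2) = Q :=
    Multiset.filter_eq_self.mpr fun j hj => by
      have := hQ j hj
      omega
  rw [Rset_eq_insert (Nat.succ_pos _) htop hle, Multiset.filter_add, hnil, hself, zero_add]

lemma dP_arPart_succ_add (hk : 0 < k) (hkm : k ≤ m) (hQ : ∀ j ∈ Q, j < m / k) :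
    dP (arPart (m + 1) k + Q) = arPart m k + dP Q := by
  have hpos : 0 < m / k := Nat.div_pos hkm hk
  have hnot : m / k + 1 ∉ Rset Q := fun h => by
    have := hQ _ (mem_of_mem_Rset h)
    omega
  have hR : (Rset (arPart (m + 1) k + Q)).val = (m / k + 1) ::ₘ (Rset Q).val := by
    rw [Rset_arPart_succ_add hk hkm hQ, Finset.insert_val_of_notMem hnot]
  have hsub : arPart (m + 1) k + Q - (m / k + 1) ::ₘ (Rset Q).val =
      (arPart m k).erase (m / k) + (Q - (Rset Q).val) := by
    rw [arPart_succ m hk, Multiset.cons_add, Multiset.sub_cons, Multiset.erase_cons_head,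
      add_tsub_assoc_of_le (Rset_val_le Q)]
  rw [dP, hR, hsub, Multiset.map_cons, Nat.add_sub_cancel, Multiset.filter_cons_of_pos _ hpos,
    Multiset.add_cons, add_assoc, ← dP, ← Multiset.cons_add,
    Multiset.cons_erase (div_mem_arPart m hk)]

lemma burgeCode_arPart_succ_add (hk : 0 < k) (hkm : k ≤ m) (h0 : 0 ∉ Q)
    (hQ : ∀ j ∈ Q, j < m / k) :
    burgeCode (arPart (m + 1) k + Q) =
      decide (1 ∈ Rset Q) :: burgeCode (arPart m k + dP Q) := by
  have hne : arPart (m + 1) k + Q ≠ 0 := by simp [arPart_succ m hk]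
  have h0' : 0 ∉ arPart (m + 1) k + Q := by
    simp [zero_notMem_arPart hk (hkm.trans m.le_succ), h0]
  have hone : 1 ≠ m / k + 1 := by
    have := Nat.div_pos hkm hk
    omega
  rw [burgeCode_eq_cons hne h0', dP_arPart_succ_add hk hkm hQ, Rset_arPart_succ_add hk hkm hQ]
  simp only [Finset.mem_insert, hone, false_or]

lemma burgeCode_arPart (hk : 0 < k) (hkm : k ≤ m) :
    burgeCode (arPart m k) =
      List.replicate (m - k) false ++ List.replicate k true ++ [false] := by
  induction m, hkm using Nat.le_induction with
  | base => simp [arPart_self hk, burgeCode_replicate_one]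
  | succ m hkm ih =>
    have hstep := burgeCode_arPart_succ_add (Q := 0) hk hkm (by simp) (by simp)
    rw [dP_zero, Rset_zero, add_zero, add_zero, ih] at hstep
    simpa [Nat.succ_sub hkm, List.replicate_succ] using hstep

lemma burgeCode_arPart_add_replicate_one (b i : ℕ) (hk : 0 < k) (hkm : 2 * k ≤ m) :
    burgeCode (arPart (m + i) k + Multiset.replicate (b + i) 1) =
      List.replicate i true ++ burgeCode (arPart m k + Multiset.replicate b 1) := by
  induction i with
  | zero => rfl
  | succ i ih =>
    have hdiv : 1 < (m + i) / k := (Nat.le_div_iff_mul_le hk).mpr (by omega)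
    rw [← add_assoc, ← add_assoc, burgeCode_arPart_succ_add hk (by omega)
      (by simp [Multiset.mem_replicate]) fun j hj => Multiset.eq_of_mem_replicate hj ▸ hdiv,
      dP_replicate_one, Rset_replicate_one, ih]
    simp [List.replicate_succ]

end AlmostRectangular

/-- If `2k ≤ r`, the Burge code of `([u]^k, 1^{u−r})` is
`β^{u−r} α^{r−k} β^k α`; if `2k > r`, the Burge code of `([u+r−2k]^{r−k}, 1^{u+2k−2r})`
is `β^{u−r} α^{r−k} β^k α`. (`false = α`, `true = β`.) -/
theorem statement9 (u r k : ℕ) (hru : r < u) (hr : 2 ≤ r) (hk1 : 1 ≤ k) (hk2 : k ≤ r - 1) :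
    (2 * k ≤ r →
      burgeCode (arPart u k + Multiset.replicate (u - r) 1) =
        List.replicate (u - r) true ++ List.replicate (r - k) false ++
          List.replicate k true ++ [false]) ∧
    (r < 2 * k →
      burgeCode (arPart (u + r - 2 * k) (r - k) + Multiset.replicate (u + 2 * k - 2 * r) 1) =
        List.replicate (u - r) true ++ List.replicate (r - k) false ++
          List.replicate k true ++ [false]) := by
  refine ⟨fun h => ?_, fun h => ?_⟩
  · have hβ := burgeCode_arPart_add_replicate_one 0 (u - r) hk1 h
    rw [Nat.add_sub_cancel' hru.le, zero_add, Multiset.replicate_zero, add_zero,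
      burgeCode_arPart hk1 (by omega)] at hβ
    simpa only [List.append_assoc] using hβ
  · have hrk : 0 < r - k := by omega
    have hβ := burgeCode_arPart_add_replicate_one (2 * k - r) (u - r) hrk le_rfl
    rw [arPart_add_replicate_one _ hrk, show 2 * (r - k) + (2 * k - r) = r by omega,
      show r - k + (2 * k - r) = k by omega, burgeCode_arPart hk1 (by omega),
      show 2 * (r - k) + (u - r) = u + r - 2 * k by omega,
      show 2 * k - r + (u - r) = u + 2 * k - 2 * r by omega] at hβ
    simpa only [List.append_assoc] using hβ
end
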